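/- If G is a connected bipartite graph of order n ≥ 1, then P_n ⪯ G and G ⪯ K_{⌈n/2⌉,⌊n/2⌋}. -/

import Mathlib

open Polynomial SimpleGraph

/-- A finset of vertices is independent: pairwise nonadjacent. -/
def IsIndepFinset {V : Type*} (G : SimpleGraph V) (s : Finset V) : Prop :=
  ∀ u ∈ s, ∀ v ∈ s, ¬ G.Adj u v

open Classical in
/-- The independence polynomial of a finite graph, with real coefficients. -/
noncomputable def indepPoly {V : Type*} [Fintype V] (G : SimpleGraph V) : Polynomial ℝ :=
  ∑ s : Finset V, if IsIndepFinset G s then (X : Polynomial ℝ) ^ s.card else 0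

/-- `xi G` : the largest real root of the independence polynomial of `G`. -/
noncomputable def xi {V : Type*} [Fintype V] (G : SimpleGraph V) : ℝ :=
  sSup {x : ℝ | (indepPoly G).eval x = 0}

/-- `Pre H G` (`H ⪯ G`) : `I(H,x) ≥ I(G,x)` for all `x ∈ [ξ(G), 0]`. -/
def Pre {V W : Type*} [Fintype V] [Fintype W] (H : SimpleGraph W) (G : SimpleGraph V) : Prop :=
  ∀ x ∈ Set.Icc (xi G) 0, (indepPoly G).eval x ≤ (indepPoly H).eval x

/-- `SPre H G` (`H ≺ G`). -/
def SPre {V W : Type*} [Fintype V] [Fintype W] (H : SimpleGraph W) (G : SimpleGraph V) : Prop :=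
  Pre H G ∧ indepPoly H ≠ indepPoly G

open Classical in
/-- A graph is well-covered if all maximal independent sets have the same size. -/
def WellCovered {V : Type*} (G : SimpleGraph V) : Prop :=
  ∀ s t : Finset V,
    IsIndepFinset G s → (∀ v ∉ s, ¬ IsIndepFinset G (insert v s)) →
    IsIndepFinset G t → (∀ v ∉ t, ¬ IsIndepFinset G (insert v t)) →
    s.card = t.card

/-- A connected unicyclic graph: connected with as many edges as vertices. -/
def Unicyclic {V : Type*} [Fintype V] (G : SimpleGraph V) : Prop :=
  G.Connected ∧ G.edgeSet.ncard = Fintype.card V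

/-- The graph star (corona with `K₁`) of `G`: each vertex `inl v` gets a pendant
vertex `inr v`. -/
def corona {V : Type*} (G : SimpleGraph V) : SimpleGraph (V ⊕ V) :=
  SimpleGraph.fromRel (fun a b =>
    match a, b with
    | Sum.inl u, Sum.inl v => G.Adj u v
    | Sum.inl u, Sum.inr v => u = v
    | _, _ => False)

/-- `Ugraph n` (`U_n`, `n ≥ 3`): a triangle `0,1,2` with `n - 3` pendant vertices attached
to vertex `0`. -/
def Ugraph (n : ℕ) : SimpleGraph (Fin n) :=
  SimpleGraph.fromRel (fun i j => i.val = 0 ∨ (i.val = 1 ∧ j.val = 2))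

/-- `Dgraph n` (`D_n`, `n ≥ 4`): a path `0,1,...,n-1` plus the chord `{0,2}`, i.e. a
triangle with a path on `n - 3` vertices attached. -/
def Dgraph (n : ℕ) : SimpleGraph (Fin n) :=
  SimpleGraph.fromRel (fun i j => j.val = i.val + 1 ∨ (i.val = 0 ∧ j.val = 2))

/-- `starGraph n` (`S_n = K_{1,n-1}`): vertex `0` adjacent to all other vertices. -/
def starGraph (n : ℕ) : SimpleGraph (Fin n) :=
  SimpleGraph.fromRel (fun i _ => i.val = 0)

/-- `Mgraph n` (`M_n`, odd `n ≥ 5`): a triangle `0,1,2` with `(n-3)/2` paths of length two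
attached at vertex `0`; the middle vertices are the odd indices `3,5,...,n-2` and the leaf
attached to middle vertex `i` is `i + 1`. -/
def Mgraph (n : ℕ) : SimpleGraph (Fin n) :=
  SimpleGraph.fromRel (fun i j =>
    (i.val = 0 ∧ (j.val ≤ 2 ∨ j.val % 2 = 1)) ∨ (i.val = 1 ∧ j.val = 2) ∨
    (i.val % 2 = 1 ∧ 3 ≤ i.val ∧ j.val = i.val + 1))

/-- `SPgraph g k ℓ` (`G(g,k,ℓ)`, for `g ∈ {3,5}` and `k + ℓ ≥ 1`): a cycle on the vertices
`0,...,g-1`, a copy of `P_k*` on the vertices `g,...,g+2k-1` (path vertices at even offsets,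
each followed by its pendant vertex) joined to the cycle vertex `0` by an edge to the
path end `g`, and a copy of `P_ℓ*` on the vertices `g+2k,...,g+2k+2ℓ-1` joined to the cycle
vertex `2` by an edge to the path end `g+2k`. -/
def SPgraph (g k ℓ : ℕ) : SimpleGraph (Fin (g + 2*k + 2*ℓ)) :=
  SimpleGraph.fromRel (fun i j =>
    (i.val < g ∧ j.val < g ∧ (j.val = i.val + 1 ∨ (i.val = 0 ∧ j.val = g - 1))) ∨
    (i.val = 0 ∧ 0 < k ∧ j.val = g) ∨
    (g ≤ i.val ∧ i.val < g + 2*k ∧ (i.val - g) % 2 = 0 ∧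
      (j.val = i.val + 1 ∨ (j.val = i.val + 2 ∧ j.val < g + 2*k))) ∨
    (i.val = 2 ∧ 0 < ℓ ∧ j.val = g + 2*k) ∨
    (g + 2*k ≤ i.val ∧ (i.val - (g + 2*k)) % 2 = 0 ∧
      (j.val = i.val + 1 ∨ j.val = i.val + 2)))

/-- `Gtree n` (`G_{2n}`, `n ≥ 5`): the tree on `2n` vertices with path `v_1 … v_n` at
indices `0,…,n-1`, `z_1` at index `n`, `y_1, y_2` at `n+1, n+2`, `x_1, x_2` at `n+3, n+4`
(with `v_3 z_1`, `v_3 y_1`, `y_1 y_2`, `v_5 x_1`, `x_1 x_2` edges), and pendant vertices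
`w_j` at index `n + j - 1` attached to `v_j` for `6 ≤ j ≤ n`. -/
def Gtree (n : ℕ) : SimpleGraph (Fin (2*n)) :=
  SimpleGraph.fromRel (fun a b =>
    (a.val + 1 = b.val ∧ b.val < n) ∨
    (a.val = 2 ∧ (b.val = n ∨ b.val = n + 1)) ∨
    (a.val = n + 1 ∧ b.val = n + 2) ∨
    (a.val = 4 ∧ b.val = n + 3) ∨
    (a.val = n + 3 ∧ b.val = n + 4) ∨
    (5 ≤ a.val ∧ a.val < n ∧ b.val = n + a.val))

/-!
Write `p_n` for the independence polynomial of `P_n`, and `I(S)` for that of the subgraph of `G`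
induced by `S`. On `(ξ(G), 0]` all the `I(S)` are positive: at a zero of their minimum, deletion of
a vertex `v`, `I(S) = I(S - v) + x I(S - N[v])`, makes `I` decreasing in `S`, so that `I(V)` would
vanish too.

Lower bound. If `U` meets every component of `G[S]` and `|S| = n`, then
`I(S) / I(S \ U) ≤ p_n / p_{n-1}`. For connected `S` and `u ∈ U` this follows by monotonicity from
`I(S) / I(S - u) = 1 + x / (I(S - u) / I(S - N[u]))` and the bound for `S - u`, whose components all
meet `N(u)`. A disconnected `S` is split in two, since the path ratios satisfy
`(p_{a+1} / p_a) (p_{b+1} / p_b) ≤ p_{a+b+2} / p_{a+b+1}`. Removing non-cut vertices one at a time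
then gives `I(V) ≤ p_n`.

Upper bound. Deleting an edge `uv` adds `x² I(S - N[u] - N[v]) ≥ 0`. Hence a bipartite `G` with
parts of sizes `a` and `b` satisfies `G ⪯ K_{a,b}`, and `(1 + x)^a + (1 + x)^b - 1` with `a + b`
fixed is least for balanced parts. The relation `⪯` is transitive because `H ⪯ G` forces
`ξ(H) ≤ ξ(G)`.
-/

section IndepEval

variable {V W : Type*} (G : SimpleGraph V) (x : ℝ)

lemma isIndepFinset_insert [DecidableEq V] {G : SimpleGraph V} {v : V} {s : Finset V} :
    IsIndepFinset G (insert v s) ↔ IsIndepFinset G s ∧ ∀ w ∈ s, ¬ G.Adj v w := by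
  simp only [IsIndepFinset, Finset.forall_mem_insert, SimpleGraph.irrefl, not_false_eq_true,
    true_and, G.adj_comm _ v]
  grind

open Classical in
/-- The value at `x` of the independence polynomial of the subgraph of `G` induced by `S`. -/
noncomputable def indepEval (S : Finset V) : ℝ :=
  ∑ s ∈ S.powerset with IsIndepFinset G s, x ^ s.card

lemma eval_indepPoly [Fintype V] : (indepPoly G).eval x = indepEval G x Finset.univ := by
  simp only [indepPoly, indepEval, Finset.powerset_univ, ← Finset.sum_filter,
    Polynomial.eval_finsetSum, Polynomial.eval_pow, Polynomial.eval_X]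

lemma indepEval_empty : indepEval G x ∅ = 1 := by
  classical
  rw [indepEval, Finset.powerset_empty, Finset.filter_true_of_mem (by simp [IsIndepFinset]),
    Finset.sum_singleton, Finset.card_empty, pow_zero]

lemma indepEval_insert [DecidableEq V] [DecidableRel G.Adj] {S : Finset V} {v : V} (hv : v ∉ S) :
    indepEval G x (insert v S) =
      indepEval G x S + x * indepEval G x (S.filter fun w => ¬ G.Adj v w) := by
  classical
  simp only [indepEval, Finset.sum_filter, Finset.sum_powerset_insert hv]
  simp only [← Finset.sum_filter, Finset.mul_sum, isIndepFinset_insert]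
  congr 1
  refine Finset.sum_congr ?_ fun s hs => ?_
  · ext s
    simp only [Finset.mem_filter, Finset.mem_powerset, Finset.subset_iff]
    grind
  · have hvs : v ∉ s := fun h => hv (Finset.mem_filter.1
      (Finset.mem_powerset.1 (Finset.mem_filter.1 hs).1 h)).1
    rw [Finset.card_insert_of_notMem hvs, pow_succ']

lemma indepEval_singleton (v : V) : indepEval G x {v} = 1 + x := by
  classical
  rw [← insert_empty_eq, indepEval_insert G x (Finset.notMem_empty v), Finset.filter_empty,
    indepEval_empty, mul_one]

lemma indepEval_congr {G H : SimpleGraph V} {S : Finset V}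
    (h : ∀ u ∈ S, ∀ v ∈ S, (G.Adj u v ↔ H.Adj u v)) : indepEval G x S = indepEval H x S := by
  classical
  refine Finset.sum_congr (Finset.filter_congr fun s hs => ?_) fun _ _ => rfl
  have hs := Finset.mem_powerset.1 hs
  exact forall₄_congr fun u hu v hv => not_congr (h u (hs hu) v (hs hv))

lemma indepEval_map (f : V ↪ W) (H : SimpleGraph W) (S : Finset V) :
    indepEval H x (S.map f) = indepEval (H.comap f) x S := by
  classical
  induction S using Finset.strongInduction with
  | H S ih =>
    rcases S.eq_empty_or_nonempty with rfl | ⟨v, hv⟩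
    · rw [Finset.map_empty, indepEval_empty, indepEval_empty]
    obtain ⟨R, hvR, rfl⟩ : ∃ R, v ∉ R ∧ insert v R = S :=
      ⟨S.erase v, Finset.notMem_erase v S, Finset.insert_erase hv⟩
    have hR := Finset.ssubset_insert hvR
    have hfilter : (R.map f).filter (fun w => ¬ H.Adj (f v) w) =
        (R.filter fun w => ¬ (H.comap f).Adj v w).map f := Finset.filter_map
    rw [Finset.map_insert, indepEval_insert _ _ (by simpa using hvR), indepEval_insert _ _ hvR,
      hfilter, ih R hR, ih _ ((Finset.filter_subset _ R).trans_ssubset hR)]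

lemma indepEval_induce (s : Set V) (S : Finset s) :
    indepEval (G.induce s) x S = indepEval G x (S.map (Function.Embedding.subtype _)) :=
  (indepEval_map x (Function.Embedding.subtype _) G S).symm

lemma indepEval_union [DecidableEq V] {C D : Finset V} (hdisj : Disjoint C D)
    (hCD : ∀ c ∈ C, ∀ d ∈ D, ¬ G.Adj c d) :
    indepEval G x (C ∪ D) = indepEval G x C * indepEval G x D := by
  classical
  induction D using Finset.strongInduction with
  | H D ih =>
    rcases D.eq_empty_or_nonempty with rfl | ⟨v, hv⟩
    · rw [Finset.union_empty, indepEval_empty, mul_one]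
    obtain ⟨R, hvR, rfl⟩ : ∃ R, v ∉ R ∧ insert v R = D :=
      ⟨D.erase v, Finset.notMem_erase v D, Finset.insert_erase hv⟩
    have hfactor : ∀ E ⊆ R, indepEval G x (C ∪ E) = indepEval G x C * indepEval G x E := by
      intro E hE
      have hED := hE.trans (Finset.subset_insert v R)
      exact ih E (hE.trans_ssubset (Finset.ssubset_insert hvR)) (hdisj.mono_right hED)
        fun c hc d hd => hCD c hc d (hED hd)
    have hvC : v ∉ C := Finset.disjoint_right.1 hdisj hv
    have hfilter : C.filter (fun w => ¬ G.Adj v w) = C :=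
      Finset.filter_true_of_mem fun c hc h => hCD c hc v hv h.symm
    rw [Finset.union_insert, indepEval_insert G x (by simp [hvC, hvR]), indepEval_insert G x hvR,
      Finset.filter_union, hfilter, hfactor R subset_rfl, hfactor _ (Finset.filter_subset _ R)]
    ring

lemma indepEval_zero (S : Finset V) : indepEval G 0 S = 1 := by
  classical
  induction S using Finset.induction_on with
  | empty => exact indepEval_empty G 0
  | insert v S hv ih => rw [indepEval_insert G 0 hv, ih, zero_mul, add_zero]

lemma indepEval_pos_of_nonneg {x : ℝ} (hx : 0 ≤ x) (S : Finset V) : 0 < indepEval G x S := by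
  classical
  refine Finset.sum_pos' (fun s _ => pow_nonneg hx _) ⟨∅, ?_, by simp⟩
  exact Finset.mem_filter.2 ⟨Finset.empty_mem_powerset S, by simp [IsIndepFinset]⟩

lemma continuous_indepEval (S : Finset V) : Continuous fun x => indepEval G x S :=
  continuous_finsetSum _ fun s _ => continuous_pow s.card

end IndepEval

section Positivity

variable {V : Type*} (G : SimpleGraph V) {x : ℝ}

lemma pos_on_Icc_of_ne_zero {f : ℝ → ℝ} {a b : ℝ} (hf : ContinuousOn f (Set.Icc a b))
    (hb : 0 < f b) (hne : ∀ y ∈ Set.Icc a b, f y ≠ 0) : ∀ y ∈ Set.Icc a b, 0 < f y := by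
  intro y hy
  by_contra! hy0
  obtain ⟨z, hz, hz0⟩ := intermediate_value_Icc hy.2 (hf.mono (Set.Icc_subset_Icc_left hy.1))
    ⟨hy0, hb.le⟩
  exact hne z ⟨hy.1.trans hz.1, hz.2⟩ hz0

lemma antitone_indepEval (hx : x ≤ 0) (hnonneg : ∀ S, 0 ≤ indepEval G x S) :
    Antitone (indepEval G x) := by
  classical
  refine Finset.antitone_iff_forall_insert_le.2 fun S v hv => ?_
  rw [indepEval_insert G x hv]
  exact add_le_of_nonpos_right (mul_nonpos_of_nonpos_of_nonneg hx (hnonneg _))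

lemma indepEval_pos_of_forall_univ_pos [Fintype V]
    (h : ∀ y ∈ Set.Icc x 0, 0 < indepEval G y Finset.univ) :
    ∀ y ∈ Set.Icc x 0, ∀ S, 0 < indepEval G y S := by
  let minVal : ℝ → ℝ := fun y => Finset.univ.inf' Finset.univ_nonempty (indepEval G y)
  have hcont : Continuous minVal :=
    Continuous.finset_inf'_apply _ fun S _ => continuous_indepEval G S
  have hzero : 0 < minVal 0 := by
    simp only [minVal, Finset.lt_inf'_iff, indepEval_zero, zero_lt_one, implies_true]
  have hne : ∀ y ∈ Set.Icc x 0, minVal y ≠ 0 := by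
    intro y hy hmin
    obtain ⟨T, -, hT⟩ := Finset.exists_mem_eq_inf' Finset.univ_nonempty (indepEval G y)
    have hanti := antitone_indepEval G hy.2 fun S =>
      hmin.ge.trans (Finset.inf'_le (indepEval G y) (Finset.mem_univ S))
    exact (h y hy).not_ge ((hanti (Finset.subset_univ T)).trans (hT.symm.trans hmin).le)
  intro y hy S
  exact (pos_on_Icc_of_ne_zero hcont.continuousOn hzero hne y hy).trans_le
    (Finset.inf'_le (indepEval G y) (Finset.mem_univ S))

end Positivity

section LargestRoot

variable {V W U : Type*} [Fintype V] [Fintype W] [Fintype U]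
  (G : SimpleGraph V) {H : SimpleGraph W} {K : SimpleGraph U} {x : ℝ}

lemma finite_setOf_eval_indepPoly_eq_zero : {x : ℝ | (indepPoly G).eval x = 0}.Finite := by
  refine Polynomial.finite_setOfPred_isRoot fun h0 => ?_
  have hone : (indepPoly G).eval 0 = 1 := by rw [eval_indepPoly, indepEval_zero]
  simp [h0] at hone

lemma indepEval_univ_pos_of_xi_lt (hx : xi G < x) : 0 < indepEval G x Finset.univ := by
  rcases le_total 0 x with hx0 | hx0
  · exact indepEval_pos_of_nonneg G hx0 _
  refine pos_on_Icc_of_ne_zero (continuous_indepEval G Finset.univ).continuousOn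
    (by simp only [indepEval_zero, zero_lt_one]) (fun y hy hy0 => ?_) x (Set.left_mem_Icc.2 hx0)
  have hle : y ≤ xi G := le_csSup (finite_setOf_eval_indepPoly_eq_zero G).bddAbove
    ((eval_indepPoly G y).trans hy0)
  exact (hx.trans_le hy.1).not_ge hle

lemma indepEval_pos_of_xi_lt (hx : xi G < x) (hx0 : x ≤ 0) (S : Finset V) :
    0 < indepEval G x S :=
  indepEval_pos_of_forall_univ_pos G
    (fun _ hy => indepEval_univ_pos_of_xi_lt G (hx.trans_le hy.1)) x (Set.left_mem_Icc.2 hx0) S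

lemma xi_nonpos : xi G ≤ 0 := by
  refine Real.sSup_nonpos fun y hy => ?_
  by_contra! hy0
  exact (indepEval_pos_of_nonneg G hy0.le Finset.univ).ne' ((eval_indepPoly G y).symm.trans hy)

lemma exists_mem_Icc_eval_indepPoly_eq_zero [Nonempty V] :
    ∃ y ∈ Set.Icc (-1 : ℝ) 0, (indepPoly G).eval y = 0 := by
  by_contra! hne
  simp only [eval_indepPoly] at hne
  have hpos := pos_on_Icc_of_ne_zero (continuous_indepEval G Finset.univ).continuousOn
    (by simp only [indepEval_zero, zero_lt_one]) hne
  have hsingleton := indepEval_pos_of_forall_univ_pos G hpos (-1) (by simp) {Classical.arbitrary V}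
  rw [indepEval_singleton, add_neg_cancel] at hsingleton
  exact hsingleton.false

lemma eval_indepPoly_xi [Nonempty V] : (indepPoly G).eval (xi G) = 0 := by
  obtain ⟨y, -, hy⟩ := exists_mem_Icc_eval_indepPoly_eq_zero G
  exact Set.Nonempty.csSup_mem ⟨y, hy⟩ (finite_setOf_eval_indepPoly_eq_zero G)

lemma neg_one_le_xi [Nonempty V] : -1 ≤ xi G := by
  obtain ⟨y, hy, hy0⟩ := exists_mem_Icc_eval_indepPoly_eq_zero G
  exact hy.1.trans (le_csSup (finite_setOf_eval_indepPoly_eq_zero G).bddAbove hy0)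

variable {G}

lemma pre_iff_forall_Ioc : Pre H G ↔ ∀ x ∈ Set.Ioc (xi G) 0,
    indepEval G x Finset.univ ≤ indepEval H x Finset.univ := by
  simp only [Pre, eval_indepPoly]
  refine ⟨fun h x hx => h x (Set.Ioc_subset_Icc_self hx), fun h x hx => ?_⟩
  rcases hx.2.eq_or_lt with rfl | hx0
  · rw [indepEval_zero, indepEval_zero]
  have hcl : x ∈ closure (Set.Ioc (xi G) 0) := by
    rwa [closure_Ioc (hx.1.trans_lt hx0).ne]
  exact ContinuousWithinAt.closure_le hcl (continuous_indepEval G _).continuousWithinAt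
    (continuous_indepEval H _).continuousWithinAt h

lemma Pre.xi_le [Nonempty W] (h : Pre H G) : xi H ≤ xi G := by
  by_contra! hlt
  have hle := pre_iff_forall_Ioc.1 h (xi H) ⟨hlt, xi_nonpos H⟩
  rw [← eval_indepPoly H, eval_indepPoly_xi] at hle
  exact hle.not_gt (indepEval_univ_pos_of_xi_lt G hlt)

lemma Pre.trans [Nonempty V] (hHG : Pre H G) (hGK : Pre G K) : Pre H K := fun x hx =>
  (hGK x hx).trans (hHG x ⟨hGK.xi_le.trans hx.1, hx.2⟩)

end LargestRoot

section SpanningSubgraph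

variable {V W : Type*} {G H : SimpleGraph V} {x : ℝ}

lemma indepEval_deleteEdges_singleton [DecidableEq V] [DecidableRel G.Adj] {u v : V}
    (huv : G.Adj u v) {R : Finset V} (hu : u ∉ R) (hv : v ∉ R) :
    indepEval (G.deleteEdges {s(u, v)}) x (insert u (insert v R)) =
      indepEval G x (insert u (insert v R)) +
        x ^ 2 * indepEval G x ((R.filter fun w => ¬ G.Adj u w).filter fun w => ¬ G.Adj v w) := by
  classical
  have hne := huv.ne
  have huR : u ∉ insert v R := by simp [hne, hu]
  set G' := G.deleteEdges {s(u, v)}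
  set R' := R.filter fun w => ¬ G.Adj u w
  have hvR' : v ∉ R' := fun h => hv (Finset.mem_filter.1 h).1
  have hcongr : ∀ S, u ∉ S → indepEval G' x S = indepEval G x S := fun S hS =>
    indepEval_congr x fun a ha b hb => by
      simp only [G', deleteEdges_adj, Set.mem_singleton_iff, Sym2.eq_iff]
      grind
  have hfilterG : (insert v R).filter (fun w => ¬ G.Adj u w) = R' := by
    simp [R', Finset.filter_insert, huv]
  have hfilterG' : (insert v R).filter (fun w => ¬ G'.Adj u w) = insert v R' := by
    ext w
    simp only [G', R', Finset.mem_filter, Finset.mem_insert, deleteEdges_adj,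
      Set.mem_singleton_iff, Sym2.eq_iff]
    grind
  rw [indepEval_insert G' x huR, indepEval_insert G x huR, hfilterG, hfilterG', hcongr _ huR,
    hcongr (insert v R') (by simp [R', hne, hu]), indepEval_insert G x hvR']
  ring

lemma indepEval_le_deleteEdges_singleton (hnonneg : ∀ S, 0 ≤ indepEval G x S) (e : Sym2 V)
    (S : Finset V) : indepEval G x S ≤ indepEval (G.deleteEdges {e}) x S := by
  classical
  induction e with
  | _ u v =>
    by_cases hmem : G.Adj u v ∧ u ∈ S ∧ v ∈ S
    · obtain ⟨huv, hu, hv⟩ := hmem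
      obtain ⟨R, huR, hvR, rfl⟩ : ∃ R, u ∉ R ∧ v ∉ R ∧ insert u (insert v R) = S :=
        ⟨(S.erase u).erase v, by simp, by simp, by
          rw [Finset.insert_erase (Finset.mem_erase.2 ⟨huv.ne', hv⟩), Finset.insert_erase hu]⟩
      rw [indepEval_deleteEdges_singleton huv huR hvR]
      exact le_add_of_nonneg_right (mul_nonneg (sq_nonneg x) (hnonneg _))
    · refine (indepEval_congr x fun a ha b hb => ?_).le
      simp only [deleteEdges_adj, Set.mem_singleton_iff, Sym2.eq_iff]
      grind [SimpleGraph.adj_comm]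

lemma indepEval_le_of_le [Finite V] (hHG : H ≤ G) (hnonneg : ∀ S, 0 ≤ indepEval G x S) :
    ∀ S, indepEval G x S ≤ indepEval H x S := by
  have hdelete : ∀ F : Set (Sym2 V), F.Finite →
      ∀ S, indepEval G x S ≤ indepEval (G.deleteEdges F) x S := by
    intro F hF
    induction F, hF using Set.Finite.induction_on with
    | empty => simp
    | @insert e F _ _ ih =>
      intro S
      rw [← Set.union_singleton, ← deleteEdges_deleteEdges]
      exact (ih S).trans
        (indepEval_le_deleteEdges_singleton (fun T => (hnonneg T).trans (ih T)) e S)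
  intro S
  have h := hdelete (G.edgeSet \ H.edgeSet) (Set.toFinite _) S
  rwa [deleteEdges_sdiff_eq_of_le hHG] at h

lemma indepEval_comap_univ [Fintype V] [Fintype W] (K : SimpleGraph W) (e : V ≃ W) (x : ℝ) :
    indepEval (K.comap e) x Finset.univ = indepEval K x Finset.univ := by
  rw [← Finset.map_univ_equiv e, indepEval_map]
  rfl

lemma indepPoly_comap [Fintype V] [Fintype W] (K : SimpleGraph W) (e : V ≃ W) :
    indepPoly (K.comap e) = indepPoly K :=
  Polynomial.funext fun x => by rw [eval_indepPoly, eval_indepPoly, indepEval_comap_univ]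

lemma pre_of_le_comap [Fintype V] [Fintype W] {K : SimpleGraph W} (e : V ≃ W)
    (h : G ≤ K.comap e) : Pre G K := by
  have hxi : xi (K.comap e) = xi K := by simp only [xi, indepPoly_comap]
  refine pre_iff_forall_Ioc.2 fun x hx => ?_
  rw [← indepEval_comap_univ K e]
  exact indepEval_le_of_le h
    (fun S => (indepEval_pos_of_xi_lt _ (hxi.trans_lt hx.1) hx.2 S).le) Finset.univ

end SpanningSubgraph

section CompleteBipartite

variable {V : Type*} {G : SimpleGraph V}

lemma indepEval_of_isIndepFinset (x : ℝ) {S : Finset V} (hS : IsIndepFinset G S) :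
    indepEval G x S = (1 + x) ^ S.card := by
  classical
  induction S using Finset.induction_on with
  | empty => rw [indepEval_empty, Finset.card_empty, pow_zero]
  | insert v S hv ih =>
    obtain ⟨hS, hvS⟩ := isIndepFinset_insert.1 hS
    rw [indepEval_insert G x hv, Finset.filter_true_of_mem hvS, ih hS,
      Finset.card_insert_of_notMem hv]
    ring

lemma indepEval_union_of_isIndepFinset [DecidableEq V] (x : ℝ) {A B : Finset V}
    (hA : IsIndepFinset G A) (hB : IsIndepFinset G B) (hAB : ∀ a ∈ A, ∀ b ∈ B, G.Adj a b) :
    indepEval G x (A ∪ B) = (1 + x) ^ A.card + (1 + x) ^ B.card - 1 := by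
  classical
  induction B using Finset.induction_on with
  | empty =>
    rw [Finset.union_empty, indepEval_of_isIndepFinset x hA, Finset.card_empty, pow_zero,
      add_sub_cancel_right]
  | insert b B hb ih =>
    obtain ⟨hB, hbB⟩ := isIndepFinset_insert.1 hB
    have hbA : ∀ a ∈ A, G.Adj b a := fun a ha => (hAB a ha b (Finset.mem_insert_self b B)).symm
    have hnotMem : b ∉ A ∪ B := by
      simpa [hb] using fun h => G.irrefl (hbA b h)
    have hfilter : (A ∪ B).filter (fun w => ¬ G.Adj b w) = B := by
      rw [Finset.filter_union, Finset.filter_false_of_mem fun a ha h => h (hbA a ha),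
        Finset.filter_true_of_mem hbB, Finset.empty_union]
    rw [Finset.union_insert, indepEval_insert G x hnotMem, hfilter,
      ih hB fun a ha b' hb' => hAB a ha b' (Finset.mem_insert_of_mem hb'),
      indepEval_of_isIndepFinset x hB, Finset.card_insert_of_notMem hb]
    ring

lemma indepEval_completeBipartiteGraph (α β : Type*) [Fintype α] [Fintype β] (x : ℝ) :
    indepEval (completeBipartiteGraph α β) x Finset.univ =
      (1 + x) ^ Fintype.card α + (1 + x) ^ Fintype.card β - 1 := by
  classical
  have huniv : (Finset.univ : Finset (α ⊕ β)) =
      Finset.univ.map .inl ∪ Finset.univ.map .inr := by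
    ext (a | b) <;> simp
  rw [huniv, indepEval_union_of_isIndepFinset]
  · simp only [Finset.card_map, Finset.card_univ]
  all_goals simp [IsIndepFinset]

lemma pow_add_pow_le_pow_add_pow {t : ℝ} (h0 : 0 ≤ t) (h1 : t ≤ 1) {a b c d : ℕ}
    (hsum : a + b = c + d) (hmin : min a b ≤ min c d) : t ^ c + t ^ d ≤ t ^ a + t ^ b := by
  wlog hab : a ≤ b generalizing a b
  · rw [add_comm (t ^ a)]
    exact this (by omega) (by omega) (by omega)
  obtain ⟨k, rfl⟩ := Nat.exists_eq_add_of_le (show a ≤ c by omega)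
  obtain ⟨l, rfl⟩ := Nat.exists_eq_add_of_le (show a ≤ d by omega)
  obtain rfl : b = a + k + l := by omega
  have hk : 0 ≤ 1 - t ^ k := sub_nonneg.2 (pow_le_one₀ h0 h1)
  have hl : 0 ≤ 1 - t ^ l := sub_nonneg.2 (pow_le_one₀ h0 h1)
  have hdiff : t ^ a + t ^ (a + k + l) - (t ^ (a + k) + t ^ (a + l)) =
      t ^ a * ((1 - t ^ k) * (1 - t ^ l)) := by ring
  exact sub_nonneg.1 (hdiff ▸ mul_nonneg (pow_nonneg h0 a) (mul_nonneg hk hl))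

lemma pre_completeBipartiteGraph_of_min_le {α β γ δ : Type*}
    [Fintype α] [Fintype β] [Fintype γ] [Fintype δ] [Nonempty (γ ⊕ δ)]
    (hsum : Fintype.card α + Fintype.card β = Fintype.card γ + Fintype.card δ)
    (hmin : min (Fintype.card α) (Fintype.card β) ≤ min (Fintype.card γ) (Fintype.card δ)) :
    Pre (completeBipartiteGraph α β) (completeBipartiteGraph γ δ) := by
  intro x hx
  have hx1 : -1 ≤ x := (neg_one_le_xi _).trans hx.1
  simp only [eval_indepPoly, indepEval_completeBipartiteGraph]
  exact sub_le_sub_right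
    (pow_add_pow_le_pow_add_pow (by linarith) (by linarith [hx.2]) hsum hmin) 1

lemma pre_completeBipartiteGraph_coloring [Fintype V] (c : G.Coloring (Fin 2)) :
    Pre G (completeBipartiteGraph {v // c v = 0} {v // ¬ c v = 0}) := by
  refine pre_of_le_comap (Equiv.sumCompl fun v => c v = 0).symm fun u v huv => ?_
  have hne := c.valid huv
  by_cases hu : c u = 0 <;> by_cases hv : c v = 0
  · exact absurd (hu.trans hv.symm) hne
  · simp [Equiv.sumCompl_symm_apply_of_pos, Equiv.sumCompl_symm_apply_of_neg, hu, hv]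
  · simp [Equiv.sumCompl_symm_apply_of_pos, Equiv.sumCompl_symm_apply_of_neg, hu, hv]
  · omega

lemma pre_completeBipartiteGraph_of_colorable_two [Fintype V] [Nonempty V] (hG : G.Colorable 2) :
    Pre G (completeBipartiteGraph (Fin ((Fintype.card V + 1) / 2)) (Fin (Fintype.card V / 2))) := by
  classical
  obtain ⟨c⟩ := hG
  have hcard := Fintype.card_congr (Equiv.sumCompl fun v => c v = 0)
  rw [Fintype.card_sum] at hcard
  have hpos : 0 < Fintype.card V := Fintype.card_pos
  have : Nonempty ({v // c v = 0} ⊕ {v // ¬ c v = 0}) :=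
    (Equiv.sumCompl fun v => c v = 0).nonempty
  have : Nonempty (Fin ((Fintype.card V + 1) / 2) ⊕ Fin (Fintype.card V / 2)) :=
    ⟨.inl ⟨0, by omega⟩⟩
  refine (pre_completeBipartiteGraph_coloring c).trans (pre_completeBipartiteGraph_of_min_le ?_ ?_)
  all_goals
    simp only [Fintype.card_fin]
    omega

end CompleteBipartite

section Path

/-- The value at `x` of the independence polynomial of the path `P_n`, defined through the recursion
of the path polynomials; see `indepEval_pathGraph` for the identification. -/
noncomputable def pathEval (x : ℝ) : ℕ → ℝ
  | 0 => 1
  | 1 => 1 + x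
  | n + 2 => pathEval x (n + 1) + x * pathEval x n

variable {x : ℝ}

lemma pathEval_add_two (x : ℝ) (n : ℕ) :
    pathEval x (n + 2) = pathEval x (n + 1) + x * pathEval x n := rfl

-- For `n = 0` the truncated subtraction returns `pathEval x 0 = 1`, which is the value at index
-- `-1` that the recursion asks for.
lemma pathEval_succ (x : ℝ) (n : ℕ) :
    pathEval x (n + 1) = pathEval x n + x * pathEval x (n - 1) := by
  cases n <;> simp [pathEval]

lemma indepEval_pathGraph (x : ℝ) (n : ℕ) :
    indepEval (pathGraph n) x Finset.univ = pathEval x n := by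
  classical
  have hinitial : ∀ m ≤ n,
      indepEval (pathGraph n) x (Finset.univ.filter fun i : Fin n => i.val < m) =
        pathEval x m := by
    intro m
    induction m using Nat.strong_induction_on with
    | _ m ih =>
      intro hm
      rcases m with _ | m
      · simp [indepEval_empty, pathEval]
      let last : Fin n := ⟨m, hm⟩
      have hinsert : (Finset.univ.filter fun i : Fin n => i.val < m + 1) =
          insert last (Finset.univ.filter fun i : Fin n => i.val < m) := by
        ext i
        simp only [last, Finset.mem_filter, Finset.mem_univ, true_and, Finset.mem_insert,
          Fin.ext_iff]
        omega
      have hfilter : (Finset.univ.filter fun i : Fin n => i.val < m).filter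
          (fun w => ¬ (pathGraph n).Adj last w) =
          Finset.univ.filter fun i : Fin n => i.val < m - 1 := by
        ext i
        simp only [last, Finset.mem_filter, Finset.mem_univ, true_and, pathGraph_adj]
        omega
      rw [hinsert, indepEval_insert _ _ (by simp [last]), hfilter, ih m (by omega) (by omega),
        ih (m - 1) (by omega) (by omega), pathEval_succ]
  have h := hinitial n le_rfl
  rwa [Finset.filter_true_of_mem fun i _ => i.isLt] at h

lemma pathEval_add_add_three (x : ℝ) (a b : ℕ) :
    pathEval x (a + b + 3) =
      pathEval x (a + 1) * pathEval x (b + 1) + x * (pathEval x a * pathEval x b) := by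
  induction b using Nat.twoStepInduction with
  | zero => simp only [pathEval]; ring
  | one => simp only [pathEval]; ring
  | more b ih₀ ih₁ =>
    have h := pathEval_add_two x (a + b + 3)
    have h₁ := pathEval_add_two x (b + 1)
    have h₀ := pathEval_add_two x b
    linear_combination h + ih₁ + x * ih₀ - pathEval x (a + 1) * h₁ - x * pathEval x a * h₀

lemma pathEval_add_add_one_le_mul (hx : x ≤ 0) (a b : ℕ)
    (hpos : ∀ k ≤ a + b, 0 < pathEval x k) :
    pathEval x (a + b + 1) ≤ pathEval x a * pathEval x b := by
  rcases a with _ | a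
  · rw [zero_add, pathEval_succ, pathEval, one_mul]
    exact add_le_of_nonpos_right (mul_nonpos_of_nonpos_of_nonneg hx (hpos _ (by omega)).le)
  rcases b with _ | b
  · rw [add_zero, pathEval_succ, pathEval, mul_one]
    exact add_le_of_nonpos_right (mul_nonpos_of_nonpos_of_nonneg hx (hpos _ (by omega)).le)
  · rw [show a + 1 + (b + 1) + 1 = a + b + 3 by ring, pathEval_add_add_three]
    exact add_le_of_nonpos_right (mul_nonpos_of_nonpos_of_nonneg hx
      (mul_pos (hpos a (by omega)) (hpos b (by omega))).le)

-- With `p = pathEval x`, this says `p (a+1) / p a * (p (b+1) / p b) ≤ p (a+b+2) / p (a+b+1)`; the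
-- difference of the two sides is `(p a * p b - p (a+b+1)) * p (a+b+3)`.
lemma pathEval_mul_mul_le (hx : x ≤ 0) (a b : ℕ) (hpos : ∀ k ≤ a + b, 0 < pathEval x k)
    (hlast : 0 ≤ pathEval x (a + b + 3)) :
    pathEval x (a + 1) * pathEval x (b + 1) * pathEval x (a + b + 1) ≤
      pathEval x (a + b + 2) * (pathEval x a * pathEval x b) := by
  have hdiff := mul_nonneg (sub_nonneg.2 (pathEval_add_add_one_le_mul hx a b hpos)) hlast
  have hsplit := pathEval_add_add_three x a b
  have hrec : pathEval x (a + b + 3) = pathEval x (a + b + 2) + x * pathEval x (a + b + 1) := rfl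
  linear_combination hdiff - pathEval x (a + b + 1) * hsplit + pathEval x a * pathEval x b * hrec

end Path

section PathRatio

variable {V : Type*} {G : SimpleGraph V} {x : ℝ}

/-- `U` meets every connected component of the subgraph of `G` induced by `S`. Unions of
components are encoded as the sets `C ⊆ S` with no edge between `C` and `S \ C`, so that no walks
are needed. -/
def MeetsComponents (G : SimpleGraph V) (S : Finset V) (U : Set V) : Prop :=
  ∀ C ⊆ S, C.Nonempty → (∀ c ∈ C, ∀ d ∈ S, d ∉ C → ¬ G.Adj c d) → ∃ u ∈ C, u ∈ U

lemma meetsComponents_univ_singleton [Fintype V] (hG : G.Preconnected) (v : V) :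
    MeetsComponents G Finset.univ {v} := by
  rintro C - ⟨c, hc⟩ hclosed
  refine ⟨v, ?_, rfl⟩
  obtain ⟨p⟩ := hG c v
  induction p with
  | nil => exact hc
  | cons hadj _ ih =>
    exact ih (by_contra fun hn => hclosed _ hc _ (Finset.mem_univ _) hn hadj)

lemma MeetsComponents.neighborSet [DecidableEq V] {R : Finset V} {u : V}
    (h : MeetsComponents G (insert u R) {u}) (hu : u ∉ R) :
    MeetsComponents G R (G.neighborSet u) := by
  intro C hCR hne hclosed
  by_contra! hno
  obtain ⟨_, huC, rfl⟩ := h C (hCR.trans (Finset.subset_insert u R)) hne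
    (by
      intro c hc d hd hdC hadj
      rcases Finset.mem_insert.1 hd with rfl | hdR
      · exact hno c hc hadj.symm
      · exact hclosed c hc d hdR hdC hadj)
  exact hu (hCR huC)

lemma MeetsComponents.of_union_left [DecidableEq V] {C D : Finset V} {U : Set V}
    (h : MeetsComponents G (C ∪ D) U) (hCD : ∀ c ∈ C, ∀ d ∈ D, ¬ G.Adj c d) :
    MeetsComponents G C U := fun E hEC hne hclosed =>
  h E (hEC.trans Finset.subset_union_left) hne fun e he d hd hdE =>
    (Finset.mem_union.1 hd).elim (fun hdC => hclosed e he d hdC hdE) (hCD e (hEC he) d)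

open Classical in
/-- The inequality `I(S) / I(S \ U) ≤ p_n / p_{n-1}` with `n = |S|` and `p_n = I(P_n)`, cleared of
denominators. For `S = ∅` truncated subtraction yields the correct convention `p_{-1} = 1`. -/
def PathRatioBound (G : SimpleGraph V) (x : ℝ) (S : Finset V) (U : Set V) : Prop :=
  indepEval G x S * pathEval x (S.card - 1) ≤
    pathEval x S.card * indepEval G x (S.filter fun w => w ∉ U)

lemma PathRatioBound.indepEval_insert_mul_le [DecidableEq V] {R : Finset V} {u : V}
    (h : PathRatioBound G x R (G.neighborSet u)) (hx : x ≤ 0) (hu : u ∉ R) :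
    indepEval G x (insert u R) * pathEval x R.card ≤
      pathEval x (R.card + 1) * indepEval G x R := by
  classical
  have hmul := mul_le_mul_of_nonpos_left h hx
  simp only [mem_neighborSet] at hmul
  rw [indepEval_insert G x hu, pathEval_succ]
  linarith

lemma PathRatioBound.insert_of_mem [DecidableEq V] {R : Finset V} {u : V} {U : Set V}
    (h : PathRatioBound G x R (G.neighborSet u)) (hx : x ≤ 0) (hu : u ∉ R) (huU : u ∈ U)
    (hnonneg : ∀ S, 0 ≤ indepEval G x S) (hp : 0 ≤ pathEval x (R.card + 1)) :
    PathRatioBound G x (insert u R) U := by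
  classical
  have hsub : (insert u R).filter (fun w => w ∉ U) ⊆ R := by
    rw [Finset.filter_insert, if_neg (not_not.2 huU)]
    exact Finset.filter_subset _ R
  rw [PathRatioBound, Finset.card_insert_of_notMem hu, Nat.add_sub_cancel]
  exact (h.indepEval_insert_mul_le hx hu).trans
    (mul_le_mul_of_nonneg_left (antitone_indepEval G hx hnonneg hsub) hp)

lemma PathRatioBound.union [DecidableEq V] {C D : Finset V} {U : Set V}
    (hC : PathRatioBound G x C U) (hD : PathRatioBound G x D U) (hx : x ≤ 0)
    (hpos : ∀ S, 0 < indepEval G x S) (hCne : C.Nonempty) (hDne : D.Nonempty)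
    (hdisj : Disjoint C D) (hCD : ∀ c ∈ C, ∀ d ∈ D, ¬ G.Adj c d)
    (hp : ∀ k ≤ (C ∪ D).card, 0 < pathEval x k) (hlast : 0 ≤ pathEval x ((C ∪ D).card + 1)) :
    PathRatioBound G x (C ∪ D) U := by
  classical
  obtain ⟨a, ha⟩ := Nat.exists_eq_succ_of_ne_zero hCne.card_ne_zero
  obtain ⟨b, hb⟩ := Nat.exists_eq_succ_of_ne_zero hDne.card_ne_zero
  have hcard : (C ∪ D).card = a + b + 2 := by
    rw [Finset.card_union_of_disjoint hdisj]
    omega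
  rw [hcard] at hp hlast
  unfold PathRatioBound at hC hD ⊢
  rw [hcard, Finset.filter_union, indepEval_union G x hdisj hCD, indepEval_union G x
    (Finset.disjoint_filter_filter hdisj) fun c hc d hd =>
      hCD c (Finset.mem_filter.1 hc).1 d (Finset.mem_filter.1 hd).1]
  rw [ha, Nat.succ_sub_one] at hC
  rw [hb, Nat.succ_sub_one] at hD
  set IC := indepEval G x C
  set ID := indepEval G x D
  set JC := indepEval G x (C.filter fun w => w ∉ U)
  set JD := indepEval G x (D.filter fun w => w ∉ U)
  have hpa : 0 < pathEval x a := hp a (by omega)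
  have hpb : 0 < pathEval x b := hp b (by omega)
  refine le_of_mul_le_mul_right ?_ (mul_pos hpa hpb)
  calc IC * ID * pathEval x (a + b + 1) * (pathEval x a * pathEval x b)
      = IC * pathEval x a * (ID * pathEval x b) * pathEval x (a + b + 1) := by ring
    _ ≤ pathEval x (a + 1) * JC * (pathEval x (b + 1) * JD) * pathEval x (a + b + 1) :=
        mul_le_mul_of_nonneg_right
          (mul_le_mul hC hD (mul_pos (hpos D) hpb).le
            (mul_pos (hp (a + 1) (by omega)) (hpos _)).le)
          (hp (a + b + 1) (by omega)).le
    _ = pathEval x (a + 1) * pathEval x (b + 1) * pathEval x (a + b + 1) * (JC * JD) := by ring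
    _ ≤ pathEval x (a + b + 2) * (pathEval x a * pathEval x b) * (JC * JD) :=
        mul_le_mul_of_nonneg_right
          (pathEval_mul_mul_le hx a b (fun k hk => hp k (by omega)) hlast)
          (mul_pos (hpos _) (hpos _)).le
    _ = pathEval x (a + b + 2) * (JC * JD) * (pathEval x a * pathEval x b) := by ring

lemma MeetsComponents.pathRatioBound {S : Finset V} {U : Set V} (hU : MeetsComponents G S U)
    (hx : x ≤ 0) (hpos : ∀ S, 0 < indepEval G x S) (hp : ∀ k ≤ S.card, 0 < pathEval x k)
    (hlast : 0 ≤ pathEval x (S.card + 1)) : PathRatioBound G x S U := by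
  classical
  induction S using Finset.strongInduction generalizing U with
  | H S ih =>
    have ih' : ∀ R ⊂ S, ∀ U, MeetsComponents G R U → PathRatioBound G x R U := by
      intro R hR U hRU
      have hlt := Finset.card_lt_card hR
      exact ih R hR hRU (fun k hk => hp k (by omega)) (hp _ (by omega)).le
    rcases S.eq_empty_or_nonempty with rfl | hne
    · simp [PathRatioBound, indepEval_empty, pathEval]
    obtain ⟨u, huS, huU⟩ := hU S subset_rfl hne fun _ _ _ hd hdS => absurd hd hdS
    by_cases hconn : MeetsComponents G S {u}
    · obtain ⟨R, huR, rfl⟩ : ∃ R, u ∉ R ∧ insert u R = S :=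
        ⟨S.erase u, Finset.notMem_erase u S, Finset.insert_erase huS⟩
      exact (ih' R (Finset.ssubset_insert huR) _ (hconn.neighborSet huR)).insert_of_mem hx huR huU
        (fun T => (hpos T).le) (hp _ (Finset.card_insert_of_notMem huR).ge).le
    · obtain ⟨C, hCS, hCne, hclosed, huC⟩ : ∃ C ⊆ S, C.Nonempty ∧
          (∀ c ∈ C, ∀ d ∈ S, d ∉ C → ¬ G.Adj c d) ∧ u ∉ C := by
        simpa [MeetsComponents] using hconn
      obtain ⟨D, hdisj, rfl⟩ : ∃ D, Disjoint C D ∧ C ∪ D = S :=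
        ⟨S \ C, Finset.disjoint_sdiff, Finset.union_sdiff_of_subset hCS⟩
      have huD : u ∈ D := (Finset.mem_union.1 huS).resolve_left huC
      have hCD : ∀ c ∈ C, ∀ d ∈ D, ¬ G.Adj c d := fun c hc d hd =>
        hclosed c hc d (Finset.mem_union_right C hd) (Finset.disjoint_right.1 hdisj hd)
      have hCss : C ⊂ C ∪ D := left_lt_sup.2 fun hDC => huC (hDC huD)
      have hDss : D ⊂ C ∪ D := right_lt_sup.2 fun hsub =>
        hCne.ne_empty (hdisj.eq_bot_of_le hsub)
      refine (ih' C hCss U (hU.of_union_left hCD)).union (ih' D hDss U ?_) hx hpos hCne ⟨u, huD⟩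
        hdisj hCD hp hlast
      exact (Finset.union_comm C D ▸ hU).of_union_left fun d hd c hc h => hCD c hc d hd h.symm

end PathRatio

section Connected

variable {V : Type*} [Fintype V] {G : SimpleGraph V} {x : ℝ}

lemma indepEval_univ_mul_pathEval_le [DecidableEq V] (hG : G.Preconnected) (v : V) (hx : x ≤ 0)
    (hpos : ∀ S, 0 < indepEval G x S) {n : ℕ} (hcard : Fintype.card V = n + 1)
    (hp : ∀ k ≤ n, 0 < pathEval x k) (hlast : 0 ≤ pathEval x (n + 1)) :
    indepEval G x Finset.univ * pathEval x n ≤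
      pathEval x (n + 1) * indepEval G x (Finset.univ.erase v) := by
  have hinsert := Finset.insert_erase (Finset.mem_univ v)
  have hv := Finset.notMem_erase v Finset.univ
  have hcardR : (Finset.univ.erase v).card = n := by
    rw [Finset.card_erase_of_mem (Finset.mem_univ v), Finset.card_univ, hcard, Nat.add_sub_cancel]
  have hmeets : MeetsComponents G (insert v (Finset.univ.erase v)) {v} :=
    hinsert.symm ▸ meetsComponents_univ_singleton hG v
  have hratio := ((hmeets.neighborSet hv).pathRatioBound hx hpos (by rwa [hcardR])
    (by rwa [hcardR])).indepEval_insert_mul_le hx hv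
  rwa [hinsert, hcardR] at hratio

lemma pathEval_pos_on_Icc {n : ℕ} (hne : ∀ y ∈ Set.Icc x 0, pathEval y n ≠ 0) :
    ∀ y ∈ Set.Icc x 0, 0 < pathEval y n := by
  simp only [← indepEval_pathGraph] at hne ⊢
  exact pos_on_Icc_of_ne_zero (continuous_indepEval _ _).continuousOn
    (by simp only [indepEval_zero, zero_lt_one]) hne

-- The positivity of the path polynomials is proved along the way: at a zero of `p_{n+1}` the ratio
-- bound would make `I(G) * p_n` nonpositive.
lemma indepEval_le_pathEval_of_preconnected (hG : G.Preconnected)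
    (hpos : ∀ y ∈ Set.Icc x 0, ∀ S, 0 < indepEval G y S) :
    ∀ y ∈ Set.Icc x 0, (∀ k ≤ Fintype.card V, 0 < pathEval y k) ∧
      indepEval G y Finset.univ ≤ pathEval y (Fintype.card V) := by
  classical
  induction hn : Fintype.card V generalizing V with
  | zero =>
    have := Fintype.card_eq_zero_iff.1 hn
    intro y _
    simp [pathEval, Finset.univ_eq_empty, indepEval_empty]
  | succ n ih =>
    have : Nonempty V := Fintype.card_pos_iff.1 (by omega)
    obtain ⟨v, hv⟩ :=
      Connected.exists_preconnected_induce_compl_singleton_of_finite (G := G) ⟨hG⟩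
    have hcard : Fintype.card ({v}ᶜ : Set V) = n := by
      rw [Fintype.card_compl_set, hn, Fintype.card_unique, Nat.add_sub_cancel]
    have hmap : (Finset.univ : Finset ({v}ᶜ : Set V)).map (Function.Embedding.subtype _) =
        Finset.univ.erase v := by
      ext w
      simp
    have hrest := ih hv (fun y hy S => (hpos y hy _).trans_eq (indepEval_induce G y _ S).symm) hcard
    simp only [indepEval_induce, hmap] at hrest
    have hratio := fun y (hy : y ∈ Set.Icc x 0) =>
      indepEval_univ_mul_pathEval_le hG v hy.2 (hpos y hy) hn (hrest y hy).1
    have hlast : ∀ y ∈ Set.Icc x 0, 0 < pathEval y (n + 1) := pathEval_pos_on_Icc fun y hy h0 => by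
      have hle := hratio y hy h0.ge
      rw [h0, zero_mul] at hle
      exact hle.not_gt (mul_pos (hpos y hy _) ((hrest y hy).1 n le_rfl))
    refine fun y hy => ⟨fun k hk => ?_, ?_⟩
    · rcases Nat.le_succ_iff.1 hk with hk | rfl
      exacts [(hrest y hy).1 k hk, hlast y hy]
    · exact le_of_mul_le_mul_right ((hratio y hy (hlast y hy).le).trans
        (mul_le_mul_of_nonneg_left (hrest y hy).2 (hlast y hy).le)) ((hrest y hy).1 n le_rfl)

lemma pre_pathGraph_of_preconnected (hG : G.Preconnected) :
    Pre (pathGraph (Fintype.card V)) G := by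
  refine pre_iff_forall_Ioc.2 fun x hx => ?_
  rw [indepEval_pathGraph]
  exact (indepEval_le_pathEval_of_preconnected hG
    (fun y hy => indepEval_pos_of_xi_lt G (hx.1.trans_le hy.1) hy.2) x ⟨le_rfl, hx.2⟩).2

end Connected

theorem stmt18_general {V : Type*} [Fintype V] (n : ℕ) (hn : 1 ≤ n) (G : SimpleGraph V)
    (hcard : Fintype.card V = n) :
    (G.Connected → Pre (pathGraph n) G) ∧
      (G.Colorable 2 → Pre G (completeBipartiteGraph (Fin ((n + 1) / 2)) (Fin (n / 2)))) := by
  subst hcard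
  have : Nonempty V := Fintype.card_pos_iff.1 hn
  exact ⟨fun hconn => pre_pathGraph_of_preconnected hconn.preconnected,
    pre_completeBipartiteGraph_of_colorable_two⟩

/-- If `G` is a connected bipartite graph of order `n ≥ 1`, then
`P_n ⪯ G` and `G ⪯ K_{⌈n/2⌉,⌊n/2⌋}`. -/
theorem stmt18 {V : Type*} [Fintype V] (n : ℕ) (hn : 1 ≤ n) (G : SimpleGraph V)
    (hcard : Fintype.card V = n) (hconn : G.Connected) (hbip : G.Colorable 2) :
    Pre (pathGraph n) G ∧
    Pre G (completeBipartiteGraph (Fin ((n + 1) / 2)) (Fin (n / 2))) := by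
  exact (stmt18_general n hn G hcard).imp (· hconn) (· hbip)
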